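/- There exists an absolute constant C such that: for every finite undirected unweighted simple graph G on n vertices (n ≥ 2) and every real d with 1 < d < n, there is a subgraph G' ⊆ G with at most C · n · d edges such that for every pair of vertices u, v connected in G, dist_{G'}(u,v) ≤ dist_G(u,v) + C · (n/d) · log n. -/

import Mathlib

/-!
The spanner `G'` is the union of two subgraphs of `G`.

* Choose a maximal set `C` of vertices with `d |C| ≤ |N(C)|`. Then `|C| ≤ n / d`, and every vertex
  has at most `d` neighbours outside `N(C)`, so at most `n d` edges are not contained in `N(C)`;
  keep these. A shortest path meets the neighbourhood of each vertex of `C` in at most three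
  vertices, hence loses at most `3 n / d` edges.
* Every edge of `G` has a detour of length `O(log n)` in a subgraph with at most `2 n` edges: some
  ball of radius `O(log n)` at most doubles in size when its radius grows by one. A breadth-first
  search tree of the larger ball serves all edges meeting the smaller one, which is then deleted.

Replacing the lost edges of a shortest path by detours costs `O((n / d) log n)` in total.
-/

theorem exists_le_two_mul_of_lt_two_pow {f : ℕ → ℕ} (h0 : 0 < f 0) {L : ℕ} (hL : f L < 2 ^ L) :
    ∃ r < L, f (r + 1) ≤ 2 * f r := by
  by_contra! h
  have hpow (r : ℕ) (hr : r ≤ L) : 2 ^ r ≤ f r := by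
    induction r with
    | zero => exact h0
    | succ r ih => grind
  exact (hpow L le_rfl).not_gt hL

theorem natLog_two_add_one_le {n : ℕ} (hn : 2 ≤ n) : (Nat.log 2 n + 1 : ℝ) ≤ 3 * Real.log n := by
  have hlog2 : 2 / 3 < Real.log 2 := by linarith [Real.log_two_gt_d9]
  have hle : Real.log 2 ≤ Real.log n := Real.log_le_log two_pos (by exact_mod_cast hn)
  have hfloor : Nat.log 2 n * Real.log 2 ≤ Real.log n := by
    rw [← le_div_iff₀ (by linarith)]
    exact_mod_cast Real.natLog_le_logb n 2
  nlinarith [(Nat.log 2 n).cast_nonneg (α := ℝ)]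

section Distance

open SimpleGraph

variable {V W : Type*} {G H : SimpleGraph V}

theorem edist_hom_le {K : SimpleGraph W} (f : G →g K) (u v : V) :
    K.edist (f u) (f v) ≤ G.edist u v :=
  le_iInf fun p ↦ (edist_le (p.map f)).trans_eq (by rw [Walk.length_map])

theorem edist_lt_add_one_of_adj {c x y : V} {r : ℕ∞} (hx : G.edist x c < r) (hxy : G.Adj x y) :
    G.edist y c < r + 1 :=
  calc
    G.edist y c ≤ G.edist y x + G.edist x c := G.edist_triangle
    _ = G.edist x c + 1 := by rw [edist_eq_one_iff_adj.2 hxy.symm, add_comm]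
    _ < r + 1 := (ENat.add_lt_add_iff_right ENat.one_ne_top).2 hx

theorem exists_adj_edist_add_one_eq {x c : V} (hreach : G.Reachable x c) (hne : x ≠ c) :
    ∃ y, G.Adj x y ∧ G.edist y c + 1 = G.edist x c := by
  obtain ⟨p, hp⟩ := hreach.exists_walk_length_eq_edist
  cases p with
  | nil => exact absurd rfl hne
  | @cons _ y _ hxy q =>
    refine ⟨y, hxy, le_antisymm ?_ ?_⟩
    · rw [← hp, Walk.length_cons, Nat.cast_succ]
      gcongr
      exact edist_le q
    · rw [add_comm, ← edist_eq_one_iff_adj.2 hxy]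
      exact G.edist_triangle

theorem reachable_and_dist_le_of_edist_le {k : ℕ} {u v : V} (hG : G.Reachable u v)
    (h : H.edist u v ≤ G.edist u v + k) : H.Reachable u v ∧ H.dist u v ≤ G.dist u v + k := by
  rw [← hG.coe_dist_eq_edist, ← Nat.cast_add] at h
  have hH : H.Reachable u v :=
    reachable_of_edist_ne_top (ne_top_of_le_ne_top (ENat.natCast_ne_top _) h)
  rw [← hH.coe_dist_eq_edist] at h
  exact ⟨hH, by exact_mod_cast h⟩

end Distance

section MultiplicativeSpanner

open SimpleGraph

variable {V : Type*}

theorem ncard_edgeSet_spanningCoe {s : Set V} (H : SimpleGraph s) :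
    H.spanningCoe.edgeSet.ncard = H.edgeSet.ncard := by
  rw [edgeSet_map]
  exact Set.ncard_image_of_injective _ (Function.Embedding.injective _)

variable [Finite V]

theorem exists_bfs_subgraph_ball (G : SimpleGraph V) (c : V) (r : ℕ∞) :
    ∃ T ≤ G, T.edgeSet.ncard ≤ (G.ball c r).ncard ∧
      ∀ x ∈ G.ball c r, T.edist x c ≤ G.edist x c := by
  have hexists (x : V) (hx : x ∈ G.ball c r) (hne : x ≠ c) :
      ∃ y, G.Adj x y ∧ G.edist y c + 1 = G.edist x c :=
    exists_adj_edist_add_one_eq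
      (reachable_of_edist_ne_top (G.mem_ball.1 hx).ne_top) hne
  have : Nonempty V := ⟨c⟩
  choose! parent hparent using hexists
  let E : Set (Sym2 V) := (fun x ↦ s(x, parent x)) '' (G.ball c r \ {c})
  refine ⟨fromEdgeSet E, ?_, ?_, ?_⟩
  · refine (fromEdgeSet_le G).2 ?_
    rintro _ ⟨⟨x, ⟨hx, hne⟩, rfl⟩, -⟩
    exact (hparent x hx hne).1
  · calc
      (fromEdgeSet E).edgeSet.ncard ≤ E.ncard := by
        rw [edgeSet_fromEdgeSet]
        exact Set.ncard_le_ncard Set.sdiff_subset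
      _ ≤ (G.ball c r \ {c}).ncard := Set.ncard_image_le
      _ ≤ (G.ball c r).ncard := Set.ncard_le_ncard Set.sdiff_subset
  · intro x hx
    induction hk : G.edist x c using WellFoundedLT.induction generalizing x with | _ k ih
    obtain rfl | hne := eq_or_ne x c
    · simp
    obtain ⟨hadj, hdist⟩ := hparent x hx hne
    have hTadj : (fromEdgeSet E).Adj x (parent x) :=
      (fromEdgeSet_adj E).2 ⟨⟨x, ⟨hx, hne⟩, rfl⟩, hadj.ne⟩
    have hlt : G.edist (parent x) c < G.edist x c := by
      rw [← hdist]
      exact ENat.lt_add_one_iff (ne_top_of_le_ne_top hx.ne_top (hdist ▸ le_self_add)) |>.2 le_rfl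
    calc
      (fromEdgeSet E).edist x c
      _ ≤ (fromEdgeSet E).edist x (parent x)
          + (fromEdgeSet E).edist (parent x) c := (fromEdgeSet E).edist_triangle
      _ ≤ 1 + G.edist (parent x) c :=
        add_le_add (edist_le_one_iff_adj_or_eq.2 (.inl hTadj))
          (ih _ (hk ▸ hlt) (parent x) (hlt.trans hx) rfl)
      _ = k := by rw [add_comm, hdist, hk]

theorem exists_cluster [Nonempty V] (G : SimpleGraph V) {L : ℕ} (hL : Nat.card V < 2 ^ L) :
    ∃ B : Set V, B.Nonempty ∧ ∃ T ≤ G, T.edgeSet.ncard ≤ 2 * B.ncard ∧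
      ∀ x ∈ B, ∀ y, G.Adj x y → T.edist x y ≤ 2 * L := by
  obtain ⟨c⟩ := ‹Nonempty V›
  obtain ⟨r, hrL, hdouble⟩ := exists_le_two_mul_of_lt_two_pow
    (f := fun r ↦ (G.ball c (r + 1)).ncard) (by simp) ((Set.ncard_le_card _).trans_lt hL)
  obtain ⟨T, hTG, hTcard, hTdist⟩ := exists_bfs_subgraph_ball G c ((r + 1 : ℕ) + 1)
  have hradius (x : V) (hx : x ∈ G.ball c ((r + 1 : ℕ) + 1)) : T.edist x c ≤ L :=
    calc
      T.edist x c ≤ G.edist x c := hTdist x hx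
      _ ≤ (r + 1 : ℕ) := Order.le_of_lt_add_one hx
      _ ≤ L := by exact_mod_cast hrL
  refine ⟨G.ball c (r + 1), ⟨c, G.mem_ball_self (by simp)⟩, T, hTG, hTcard.trans hdouble, ?_⟩
  intro x hx y hxy
  have hx' : x ∈ G.ball c ((r + 1 : ℕ) + 1) := G.ball_mono (by simp) hx
  have hy' : y ∈ G.ball c ((r + 1 : ℕ) + 1) := edist_lt_add_one_of_adj hx hxy
  calc
    T.edist x y ≤ T.edist x c + T.edist c y := T.edist_triangle
    _ ≤ L + L := add_le_add (hradius x hx') (T.edist_comm ▸ hradius y hy')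
    _ = 2 * L := (two_mul _).symm

theorem exists_multiplicative_spanner (G : SimpleGraph V) {L : ℕ} (hL : Nat.card V < 2 ^ L) :
    ∃ H ≤ G, H.edgeSet.ncard ≤ 2 * Nat.card V ∧ ∀ x y, G.Adj x y → H.edist x y ≤ 2 * L := by
  induction hn : Nat.card V using Nat.strong_induction_on generalizing V with | _ n ih
  obtain hV | hV := isEmpty_or_nonempty V
  · exact ⟨⊥, bot_le, by simp, fun x ↦ isEmptyElim x⟩
  obtain ⟨B, hB, T, hTG, hTcard, hTdist⟩ := exists_cluster G hL
  have hsplit : B.ncard + Nat.card ↥Bᶜ = n := by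
    rw [Nat.card_coe_set_eq, Set.ncard_add_ncard_compl, hn]
  have hlt : Nat.card ↥Bᶜ < n := by have := hB.ncard_pos; lia
  obtain ⟨H, hHG, hHcard, hHdist⟩ := ih _ hlt (G.induce Bᶜ) (by lia) rfl
  refine ⟨T ⊔ H.spanningCoe, sup_le hTG ?_, ?_, fun x y hxy ↦ ?_⟩
  · exact (map_monotone _ hHG).trans (G.spanningCoe_induce_le _)
  · calc
      (T ⊔ H.spanningCoe).edgeSet.ncard ≤ T.edgeSet.ncard + H.spanningCoe.edgeSet.ncard := by
        rw [edgeSet_sup]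
        exact Set.ncard_union_le _ _
      _ ≤ 2 * B.ncard + 2 * Nat.card ↥Bᶜ := by
        rw [ncard_edgeSet_spanningCoe]
        exact add_le_add hTcard hHcard
      _ = 2 * n := by rw [← mul_add, hsplit]
  · by_cases hx : x ∈ B
    · exact (edist_anti le_sup_left).trans (hTdist x hx y hxy)
    by_cases hy : y ∈ B
    · rw [edist_comm]
      exact (edist_anti le_sup_left).trans (hTdist y hy x hxy.symm)
    · calc
        (T ⊔ H.spanningCoe).edist x y ≤ H.spanningCoe.edist x y :=
          edist_anti le_sup_right
        _ ≤ H.edist ⟨x, hx⟩ ⟨y, hy⟩ :=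
          edist_hom_le (Embedding.map (.subtype _) H).toHom ⟨x, hx⟩ ⟨y, hy⟩
        _ ≤ 2 * L := hHdist _ _ hxy

end MultiplicativeSpanner

/-- If some `f i` added more than `d` points to a maximal `C` with `d * |C| ≤ |⋃ j ∈ C, f j|`, then
`C` could be enlarged by `i`. -/
theorem exists_finset_ncard_diff_biUnion_le {ι α : Type*} [Finite ι] [Finite α] (f : ι → Set α)
    {d : ℝ} (hd : 0 ≤ d) :
    ∃ C : Finset ι, d * C.card ≤ Nat.card α ∧ ∀ i, ((f i \ ⋃ j ∈ C, f j).ncard : ℝ) ≤ d := by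
  classical
  obtain ⟨C, hC⟩ := (Set.toFinite {C : Finset ι | d * C.card ≤ (⋃ j ∈ C, f j).ncard}).exists_maximal
    ⟨∅, by simp⟩
  refine ⟨C, hC.prop.trans (by exact_mod_cast Set.ncard_le_card _), fun i ↦ ?_⟩
  by_contra! hi
  have hiC : i ∉ C := by
    intro h
    have hempty : f i \ ⋃ j ∈ C, f j = ∅ :=
      Set.sdiff_eq_empty.2 (Set.subset_iUnion₂_of_subset i h subset_rfl)
    rw [hempty, Set.ncard_empty, Nat.cast_zero] at hi
    exact hi.not_ge hd
  have hinsert : (⋃ j ∈ insert i C, f j).ncard =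
      (f i \ ⋃ j ∈ C, f j).ncard + (⋃ j ∈ C, f j).ncard := by
    rw [Finset.set_biUnion_insert, ← Set.sdiff_union_self,
      Set.ncard_union_eq Set.disjoint_sdiff_left]
  have hle : d * (insert i C).card ≤ (⋃ j ∈ insert i C, f j).ncard := by
    have hprop : d * C.card ≤ (⋃ j ∈ C, f j).ncard := hC.prop
    rw [hinsert, Finset.card_insert_of_notMem hiC]
    push_cast
    linarith
  exact hiC (hC.le_of_ge hle (Finset.subset_insert i C) (Finset.mem_insert_self i C))

/-- Every remaining edge is counted at an endpoint outside `U`. -/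
theorem ncard_edgeSet_deleteEdges_sym2_le {V : Type*} [Finite V] (G : SimpleGraph V)
    (U : Set V) {d : ℝ} (hd : ∀ v, ((G.neighborSet v \ U).ncard : ℝ) ≤ d) :
    ((G.deleteEdges U.sym2).edgeSet.ncard : ℝ) ≤ Nat.card V * d := by
  have := Fintype.ofFinite V
  have hsub : (G.deleteEdges U.sym2).edgeSet ⊆ ⋃ v, (s(v, ·)) '' (G.neighborSet v \ U) := by
    rintro ⟨x, y⟩ hxy
    obtain ⟨hadj, hU⟩ := SimpleGraph.deleteEdges_adj.1 hxy
    rw [Set.mk_mem_sym2_iff, not_and_or] at hU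
    rw [Set.mem_iUnion]
    obtain hx | hy := hU
    · exact ⟨y, x, ⟨hadj.symm, hx⟩, Sym2.eq_swap⟩
    · exact ⟨x, y, ⟨hadj, hy⟩, rfl⟩
  calc
    ((G.deleteEdges U.sym2).edgeSet.ncard : ℝ)
    _ ≤ ∑ v, (((s(v, ·)) '' (G.neighborSet v \ U)).ncard : ℝ) := by
      exact_mod_cast (Set.ncard_le_ncard hsub).trans (Set.ncard_iUnion_le_of_fintype _)
    _ ≤ ∑ _v : V, d := Finset.sum_le_sum fun v _ ↦
      (Nat.cast_le.2 Set.ncard_image_le).trans (hd v)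
    _ = Nat.card V * d := by
      rw [Finset.sum_const, Finset.card_univ, nsmul_eq_mul, Nat.card_eq_fintype_card]

section ShortestPath

open SimpleGraph

variable {V : Type*} {G H : SimpleGraph V}

theorem dist_getVert_of_length_eq_dist {u v : V} {p : G.Walk u v} (hp : p.length = G.dist u v)
    {i : ℕ} (hi : i ≤ p.length) : G.dist u (p.getVert i) = i := by
  rw [← length_eq_dist_of_subwalk hp (p.isSubwalk_take i),
    Walk.take_length, min_eq_left hi]

theorem injOn_dist_support {u v : V} {p : G.Walk u v} (hp : p.length = G.dist u v) :
    Set.InjOn (G.dist u) {x | x ∈ p.support} := by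
  intro x hx y hy hxy
  obtain ⟨i, rfl, hi⟩ := Walk.mem_support_iff_exists_getVert.1 hx
  obtain ⟨j, rfl, hj⟩ := Walk.mem_support_iff_exists_getVert.1 hy
  rw [dist_getVert_of_length_eq_dist hp hi, dist_getVert_of_length_eq_dist hp hj] at hxy
  rw [hxy]

theorem ncard_support_inter_ball_le {u v : V} {p : G.Walk u v} (hp : p.length = G.dist u v)
    (c : V) (r : ℕ) : ({x | x ∈ p.support} ∩ G.ball c (r + 1)).ncard ≤ 2 * r + 1 := by
  have hmaps : ∀ x ∈ {x | x ∈ p.support} ∩ G.ball c (r + 1),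
      G.dist u x ∈ Set.Icc (G.dist u c - r) (G.dist u c + r) := by
    classical
    rintro x ⟨hx, hxc⟩
    have hux : G.Reachable u x := (p.takeUntil x hx).reachable
    have hcx : G.Reachable x c := reachable_of_edist_ne_top (G.mem_ball.1 hxc).ne_top
    have hdist : G.dist x c ≤ r := by
      have := Order.le_of_lt_add_one (G.mem_ball.1 hxc)
      rw [← hcx.coe_dist_eq_edist] at this
      exact_mod_cast this
    have hleft := hux.dist_triangle_left c
    have hright := (hux.trans hcx).dist_triangle_left x
    rw [G.dist_comm (u := c)] at hright
    rw [Set.mem_Icc]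
    lia
  calc
    _ ≤ (Set.Icc (G.dist u c - r) (G.dist u c + r)).ncard :=
      Set.ncard_le_ncard_of_injOn _ hmaps ((injOn_dist_support hp).mono Set.inter_subset_left)
    _ ≤ 2 * r + 1 := by
      rw [← Finset.coe_Icc, Set.ncard_coe_finset, Nat.card_Icc]
      lia

theorem ncard_support_inter_biUnion_neighborSet_le {u v : V} {p : G.Walk u v}
    (hp : p.length = G.dist u v) (C : Finset V) :
    ({x | x ∈ p.support} ∩ ⋃ c ∈ C, G.neighborSet c).ncard ≤ 3 * C.card := by
  have hball (c : V) : ({x | x ∈ p.support} ∩ G.neighborSet c).ncard ≤ 3 := by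
    refine le_trans (Set.ncard_le_ncard (Set.inter_subset_inter_right _ ?_)
      (p.support.finite_toSet.inter_of_left _)) (ncard_support_inter_ball_le hp c 1)
    rw [Nat.cast_one, one_add_one_eq_two, ball_two]
    exact Set.subset_insert _ _
  rw [Set.inter_iUnion₂, mul_comm]
  exact (C.set_ncard_biUnion_le _).trans (C.sum_le_card_nsmul _ _ fun c _ ↦ hball c)

theorem edist_le_length_add_mul_ncard {U : Set V} {k : ℕ}
    (hU : ∀ x y, G.Adj x y → x ∉ U → H.Adj x y) (hk : ∀ x y, G.Adj x y → H.edist x y ≤ k)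
    {u v : V} {p : G.Walk u v} (hp : p.IsPath) :
    H.edist u v ≤ p.length + k * ({x | x ∈ p.support} ∩ U).ncard := by
  induction p with
  | nil => simp
  | @cons u w v huw q ih =>
    obtain ⟨hq, huq⟩ := (Walk.cons_isPath_iff huw q).1 hp
    have hsupport : {x | x ∈ (q.cons huw).support} = insert u {x | x ∈ q.support} := by
      ext; simp
    have htriangle : H.edist u v ≤ H.edist u w + (q.length + k * ({x | x ∈ q.support} ∩ U).ncard) :=
      H.edist_triangle.trans (add_le_add_right (ih hq) _)
    rw [hsupport, Walk.length_cons]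
    by_cases hu : u ∈ U
    · rw [Set.insert_inter_of_mem hu, Set.ncard_insert_of_notMem (fun h ↦ huq h.1)
        (q.support.finite_toSet.inter_of_left _)]
      calc
        H.edist u v ≤ k + (q.length + k * ({x | x ∈ q.support} ∩ U).ncard) :=
          htriangle.trans (add_le_add_left (hk u w huw) _)
        _ ≤ _ := by norm_cast; lia
    · rw [Set.insert_inter_of_notMem hu]
      calc
        H.edist u v ≤ 1 + (q.length + k * ({x | x ∈ q.support} ∩ U).ncard) :=
          htriangle.trans (add_le_add_left
            (edist_le_one_iff_adj_or_eq.2 (.inl (hU u w huw hu))) _)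
        _ = _ := by push_cast; ring

theorem edist_le_edist_add_mul_card {C : Finset V} {k : ℕ}
    (hC : ∀ x y, G.Adj x y → x ∉ ⋃ c ∈ C, G.neighborSet c → H.Adj x y)
    (hk : ∀ x y, G.Adj x y → H.edist x y ≤ k) (u v : V) :
    H.edist u v ≤ G.edist u v + (k * (3 * C.card) : ℕ) := by
  by_cases huv : G.Reachable u v
  · obtain ⟨p, hp⟩ := huv.exists_walk_length_eq_dist
    rw [← huv.coe_dist_eq_edist, ← hp]
    refine (edist_le_length_add_mul_ncard hC hk (p.isPath_of_length_eq_dist hp)).trans ?_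
    exact_mod_cast Nat.add_le_add_left
      (Nat.mul_le_mul_left k (ncard_support_inter_biUnion_neighborSet_le hp C)) _
  · simp [edist_eq_top_of_not_reachable huv]

end ShortestPath

theorem sparsification_spanner_general {V : Type*} [Finite V] (G : SimpleGraph V) {d : ℝ}
    (hd : 0 < d) :
    ∃ G' ≤ G, (G'.edgeSet.ncard : ℝ) ≤ Nat.card V * (d + 2) ∧
      ∀ u v, G.Reachable u v → G'.Reachable u v ∧
        (G'.dist u v : ℝ) ≤ G.dist u v + 6 * (Nat.card V / d) * (Nat.log 2 (Nat.card V) + 1) := by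
  set n := Nat.card V
  set L := Nat.log 2 n + 1 with hL
  obtain ⟨H, hHG, hHcard, hHdist⟩ :=
    exists_multiplicative_spanner G (Nat.lt_pow_succ_log_self one_lt_two n)
  obtain ⟨C, hCcard, hCdeg⟩ := exists_finset_ncard_diff_biUnion_le G.neighborSet hd.le
  set U := ⋃ c ∈ C, G.neighborSet c
  have hdist (u v : V) : (G.deleteEdges U.sym2 ⊔ H).edist u v ≤
      G.edist u v + (2 * L * (3 * C.card) : ℕ) := by
    refine edist_le_edist_add_mul_card (fun x y hxy hx ↦ ?_) (fun x y hxy ↦ ?_) u v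
    · exact .inl (SimpleGraph.deleteEdges_adj.2 ⟨hxy, fun h ↦ hx h.1⟩)
    · exact (SimpleGraph.edist_anti le_sup_right).trans (mod_cast hHdist x y hxy)
  refine ⟨G.deleteEdges U.sym2 ⊔ H, sup_le (G.deleteEdges_le _) hHG, ?_, fun u v huv ↦ ?_⟩
  · calc
      ((G.deleteEdges U.sym2 ⊔ H).edgeSet.ncard : ℝ)
      _ ≤ (G.deleteEdges U.sym2).edgeSet.ncard + H.edgeSet.ncard := by
        rw [SimpleGraph.edgeSet_sup]
        exact_mod_cast Set.ncard_union_le _ _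
      _ ≤ n * d + 2 * n :=
        add_le_add (ncard_edgeSet_deleteEdges_sym2_le G U hCdeg) (mod_cast hHcard)
      _ = n * (d + 2) := by ring
  · obtain ⟨hreach, hle⟩ := reachable_and_dist_le_of_edist_le huv (hdist u v)
    refine ⟨hreach, ?_⟩
    calc
      ((G.deleteEdges U.sym2 ⊔ H).dist u v : ℝ) ≤ G.dist u v + 6 * C.card * L := by
        refine (Nat.cast_le.2 hle).trans_eq ?_
        push_cast
        ring
      _ ≤ G.dist u v + 6 * (n / d) * (Nat.log 2 n + 1) := by
        rw [hL, Nat.cast_succ]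
        gcongr
        exact (le_div_iff₀' hd).2 hCcard

/-- **Preliminary sparsification.**
There is an absolute constant `C` such that for every finite simple graph `G`
on `n ≥ 2` vertices and every real `d` with `1 < d < n`, there is a subgraph
`G' ⊆ G` with at most `C · n · d` edges such that for every pair of vertices
connected in `G`, `dist_{G'}(u,v) ≤ dist_G(u,v) + C · (n/d) · log n`. -/
theorem sparsification_spanner :
    ∃ C : ℝ, 0 < C ∧
      ∀ (V : Type) [Fintype V] (G : SimpleGraph V), 2 ≤ Fintype.card V →
        ∀ d : ℝ, 1 < d → d < (Fintype.card V : ℝ) →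
          ∃ G' : SimpleGraph V, G' ≤ G ∧
            (G'.edgeSet.ncard : ℝ) ≤ C * (Fintype.card V : ℝ) * d ∧
            ∀ u v : V, G.Reachable u v →
              G'.Reachable u v ∧
              (G'.dist u v : ℝ) ≤ (G.dist u v : ℝ) +
                C * ((Fintype.card V : ℝ) / d) * Real.log (Fintype.card V) := by
  refine ⟨18, by norm_num, fun V _ G hn d hd _ ↦ ?_⟩
  rw [← Nat.card_eq_fintype_card] at hn ⊢
  obtain ⟨G', hG', hcard, hdist⟩ := sparsification_spanner_general G (by linarith : 0 < d)
  refine ⟨G', hG', hcard.trans ?_, fun u v huv ↦ ⟨(hdist u v huv).1, (hdist u v huv).2.trans ?_⟩⟩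
  · nlinarith [(Nat.card V).cast_nonneg (α := ℝ)]
  · calc
      (G.dist u v : ℝ) + 6 * (Nat.card V / d) * (Nat.log 2 (Nat.card V) + 1)
      _ ≤ G.dist u v + 6 * (Nat.card V / d) * (3 * Real.log (Nat.card V)) := by
        gcongr
        exact natLog_two_add_one_le hn
      _ = G.dist u v + 18 * (Nat.card V / d) * Real.log (Nat.card V) := by ring
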